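/- arXiv:1312.0843 — 2 statements merged into one kernel-verified Lean document; each statement's English description precedes it below -/
import Mathlib

section
/- Let σ and w be Radon measures on ℝ, and let I and J be finite intervals with I ⊂ 3J ∖ J. Then ∬_{I×J} |x−y|⁻¹ dσ(y) dw(x) ≤ 2 [σ,w]_{A₂} σ(I)^{1/2} w(J)^{1/2}. -/
/-!
Let `b` be a point separating the intervals `I` and `J`. For `x ∈ J` and `y ∈ I` one has
`|x - y| = |x - b| + |y - b|`, so `|x - y|⁻¹ = ∫_{t > |x - y|} t⁻² dt` is at most the integral of
`t⁻²` over those `t > 0` with `|x - b| ≤ t` and `|y - b| ≤ t`. By Tonelli the double integral is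
bounded by `∫_0^∞ F(t) t⁻² dt`, where `F(t) = σ(I ∩ [b-t, b+t]) w(J ∩ [b-t, b+t])`.

The two sets in `F(t)` lie in adjacent intervals of length `t`, so `F(t) ≤ A² t²`, and trivially
`F(t) ≤ M := σ(I) w(J)`. Hence the integral is at most `∫_0^∞ min(A², M t⁻²) dt = 2 A √M`
(split at `t = √M / A`), which gives exactly the constant `2`.
-/


open MeasureTheory Set
open scoped ENNReal

noncomputable section

/-- `K` and `L` are adjacent (bounded, nonempty, disjoint, touching) intervals
of equal length. -/
def AdjacentEq (K L : Set ℝ) : Prop :=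
  K.OrdConnected ∧ L.OrdConnected ∧ K.Nonempty ∧ L.Nonempty ∧
  Bornology.IsBounded K ∧ Bornology.IsBounded L ∧ Disjoint K L ∧
  (sSup K = sInf L ∨ sSup L = sInf K) ∧
  sSup K - sInf K = sSup L - sInf L

/-- The simple two-weight `A₂` condition `[σ,w]_{A₂} ≤ A`:
`σ(K)^{1/2} w(L)^{1/2} ≤ A |K|` for all pairs of adjacent intervals of equal length. -/
def SimpleA2 (σ w : Measure ℝ) (A : ℝ) : Prop :=
  ∀ K L : Set ℝ, AdjacentEq K L →
    Real.sqrt (σ K).toReal * Real.sqrt (w L).toReal ≤ A * (sSup K - sInf K)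


lemma AdjacentEq.symm {K L : Set ℝ} (h : AdjacentEq K L) : AdjacentEq L K := by
  obtain ⟨h1, h2, h3, h4, h5, h6, h7, h8, h9⟩ := h
  exact ⟨h2, h1, h4, h3, h6, h5, h7.symm, h8.symm, h9.symm⟩

lemma adjacentEq_Icc_Ioc (b : ℝ) {t : ℝ} (ht : 0 < t) :
    AdjacentEq (Icc (b - t) b) (Ioc b (b + t)) := by
  have h1 : b - t ≤ b := by linarith
  have h2 : b < b + t := by linarith
  refine ⟨ordConnected_Icc, ordConnected_Ioc, nonempty_Icc.2 h1, nonempty_Ioc.2 h2,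
    Metric.isBounded_Icc _ _, Metric.isBounded_Ioc _ _, ?_, ?_, ?_⟩
  · exact Set.disjoint_left.2 fun x hx hx' => absurd hx.2 (not_le.2 hx'.1)
  · left; rw [csSup_Icc h1, csInf_Ioc h2]
  · rw [csSup_Icc h1, csInf_Ioc h2, csInf_Icc h1, csSup_Ioc h2]; ring

lemma adjacentEq_Ico_Icc (b : ℝ) {t : ℝ} (ht : 0 < t) :
    AdjacentEq (Ico (b - t) b) (Icc b (b + t)) := by
  have h1 : b - t < b := by linarith
  have h2 : b ≤ b + t := by linarith
  refine ⟨ordConnected_Ico, ordConnected_Icc, nonempty_Ico.2 h1, nonempty_Icc.2 h2,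
    Metric.isBounded_Ico _ _, Metric.isBounded_Icc _ _, ?_, ?_, ?_⟩
  · exact Set.disjoint_left.2 fun x hx hx' => absurd hx'.1 (not_le.2 hx.2)
  · left; rw [csSup_Ico h1, csInf_Icc h2]
  · rw [csSup_Ico h1, csInf_Icc h2, csInf_Ico h1, csSup_Icc h2]; ring

/-- If `P` lies to the left of `b` and `Q` to the right, and they are disjoint, then the parts of
`P` and `Q` within distance `t` of `b` are covered by adjacent intervals of length `t`. The
endpoint `b` is given to whichever side may contain it. -/
lemma exists_adjacentEq {P Q : Set ℝ} {b t : ℝ} (ht : 0 < t) (hPQ : Disjoint P Q)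
    (hP : ∀ x ∈ P, x ≤ b) (hQ : ∀ x ∈ Q, b ≤ x) :
    ∃ K L : Set ℝ, AdjacentEq K L ∧ sSup K - sInf K = t ∧
      {x | |x - b| ≤ t} ∩ P ⊆ K ∧ {x | |x - b| ≤ t} ∩ Q ⊆ L := by
  by_cases hb : b ∈ P
  · refine ⟨_, _, adjacentEq_Icc_Ioc b ht, ?_, ?_, ?_⟩
    · rw [csSup_Icc (by linarith), csInf_Icc (by linarith)]; ring
    · rintro x ⟨hx : |x - b| ≤ t, hxP⟩
      exact ⟨by linarith [(abs_le.1 hx).1], hP x hxP⟩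
    · rintro x ⟨hx : |x - b| ≤ t, hxQ⟩
      refine ⟨lt_of_le_of_ne (hQ x hxQ) ?_, by linarith [(abs_le.1 hx).2]⟩
      rintro rfl
      exact Set.disjoint_left.1 hPQ hb hxQ
  · refine ⟨_, _, adjacentEq_Ico_Icc b ht, ?_, ?_, ?_⟩
    · rw [csSup_Ico (by linarith), csInf_Ico (by linarith)]; ring
    · rintro x ⟨hx : |x - b| ≤ t, hxP⟩
      refine ⟨by linarith [(abs_le.1 hx).1], lt_of_le_of_ne (hP x hxP) ?_⟩
      rintro rfl
      exact hb hxP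
    · rintro x ⟨hx : |x - b| ≤ t, hxQ⟩
      exact ⟨hQ x hxQ, by linarith [(abs_le.1 hx).2]⟩

/-- The `A₂` condition in squared form, for sets covered by a pair of adjacent intervals. -/
lemma SimpleA2.mul_le {σ w : Measure ℝ} [IsLocallyFiniteMeasure σ] [IsLocallyFiniteMeasure w]
    {A t : ℝ} (hA2 : SimpleA2 σ w A) {K L P Q : Set ℝ} (h : AdjacentEq K L)
    (hK : sSup K - sInf K = t) (hP : P ⊆ K) (hQ : Q ⊆ L) :
    σ P * w Q ≤ ENNReal.ofReal (A ^ 2 * t ^ 2) := by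
  have h1 := hA2 K L h
  have hKf : σ K ≠ ∞ := h.2.2.2.2.1.measure_lt_top.ne
  have hLf : w L ≠ ∞ := h.2.2.2.2.2.1.measure_lt_top.ne
  calc σ P * w Q ≤ σ K * w L := mul_le_mul' (measure_mono hP) (measure_mono hQ)
    _ = ENNReal.ofReal ((σ K).toReal * (w L).toReal) := by
        rw [ENNReal.ofReal_mul ENNReal.toReal_nonneg, ENNReal.ofReal_toReal hKf,
          ENNReal.ofReal_toReal hLf]
    _ ≤ _ := by
        apply ENNReal.ofReal_le_ofReal
        have h2 := pow_le_pow_left₀ (by positivity) h1 2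
        rw [mul_pow, Real.sq_sqrt ENNReal.toReal_nonneg, Real.sq_sqrt ENNReal.toReal_nonneg,
          mul_pow, hK] at h2
        exact h2

lemma lintegral_Ioi_inv_sq {c : ℝ} (hc : 0 < c) :
    ∫⁻ t in Ioi c, ENNReal.ofReal (t ^ (-2 : ℝ)) = ENNReal.ofReal c⁻¹ := by
  rw [← ofReal_integral_eq_lintegral_ofReal, integral_Ioi_rpow_of_lt (by norm_num) hc]
  · congr 1
    norm_num [Real.rpow_neg_one]
  · exact integrableOn_Ioi_rpow_of_lt (by norm_num) hc
  · filter_upwards [self_mem_ae_restrict measurableSet_Ioi] with t ht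
    exact Real.rpow_nonneg (hc.trans ht).le _

/-- `∫_0^∞ F(t) t⁻² dt ≤ 2 A √M` as soon as `F(t) ≤ min(A² t², M)`. -/
lemma lintegral_min_le {A M : ℝ} (hA : 0 ≤ A) (hM : 0 ≤ M) {F : ℝ → ℝ≥0∞}
    (h1 : ∀ t, 0 < t → F t ≤ ENNReal.ofReal (A ^ 2 * t ^ 2))
    (h2 : ∀ t, 0 < t → F t ≤ ENNReal.ofReal M) :
    ∫⁻ t in Ioi 0, ENNReal.ofReal (t ^ (-2 : ℝ)) * F t ≤ ENNReal.ofReal (2 * A * √M) := by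
  have hdeg : A = 0 ∨ M = 0 → ∫⁻ t in Ioi 0, ENNReal.ofReal (t ^ (-2 : ℝ)) * F t = 0 := by
    intro h
    refine (setLIntegral_congr_fun measurableSet_Ioi (g := fun _ => 0) fun t ht => ?_).trans
      (by simp)
    have : F t = 0 := by
      rcases h with h | h
      · simpa [h] using h1 t ht
      · simpa [h] using h2 t ht
    simp [this]
  rcases hA.eq_or_lt with hA0 | hA0
  · rw [hdeg (Or.inl hA0.symm)]; exact zero_le
  rcases hM.eq_or_lt with hM0 | hM0
  · rw [hdeg (Or.inr hM0.symm)]; exact zero_le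
  -- the two bounds on `F` agree at `c`
  set c := √M / A with hc
  have hs : 0 < √M := Real.sqrt_pos.2 hM0
  have hc0 : 0 < c := div_pos hs hA0
  rw [← Ioc_union_Ioi_eq_Ioi hc0.le]
  refine (lintegral_union_le _ _ _).trans ?_
  have e1 : ∫⁻ t in Ioc 0 c, ENNReal.ofReal (t ^ (-2 : ℝ)) * F t ≤ ENNReal.ofReal (A * √M) := by
    calc _ ≤ ∫⁻ t in Ioc 0 c, ENNReal.ofReal (A ^ 2) := by
          refine setLIntegral_mono' measurableSet_Ioc fun t ht => ?_
          refine (mul_le_mul_right (h1 t ht.1) _).trans ?_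
          have ht0 := ht.1
          rw [← ENNReal.ofReal_mul (Real.rpow_nonneg ht.1.le _)]
          apply ENNReal.ofReal_le_ofReal
          rw [Real.rpow_neg ht.1.le, Real.rpow_two]
          apply le_of_eq
          field_simp
      _ = _ := by
          rw [setLIntegral_const, Real.volume_Ioc, ← ENNReal.ofReal_mul (by positivity)]
          congr 1
          rw [hc]; field_simp; ring
  have e2 : ∫⁻ t in Ioi c, ENNReal.ofReal (t ^ (-2 : ℝ)) * F t ≤ ENNReal.ofReal (A * √M) := by
    calc _ ≤ ∫⁻ t in Ioi c, ENNReal.ofReal (t ^ (-2 : ℝ)) * ENNReal.ofReal M :=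
          setLIntegral_mono' measurableSet_Ioi fun t ht =>
            mul_le_mul_right (h2 t (hc0.trans ht)) _
      _ = _ := by
          rw [lintegral_mul_const' _ _ ENNReal.ofReal_ne_top, lintegral_Ioi_inv_sq hc0,
            ← ENNReal.ofReal_mul (by positivity)]
          congr 1
          rw [hc, inv_div, div_mul_eq_mul_div, div_eq_iff hs.ne', mul_assoc,
            Real.mul_self_sqrt hM]
  refine (add_le_add e1 e2).trans (le_of_eq ?_)
  rw [← ENNReal.ofReal_add (by positivity) (by positivity)]
  congr 1; ring

/-- Layer-cake bound for the double integral of `|x - y|⁻¹` when `b` separates `I` and `J`. -/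
lemma lintegral_kernel_le (σ w : Measure ℝ) [SFinite σ] [SFinite w] {I J : Set ℝ} {b : ℝ}
    (hI : MeasurableSet I) (hJ : MeasurableSet J) (hIJ : Disjoint I J)
    (hb : ∀ x ∈ J, ∀ y ∈ I, |x - b| ≤ |x - y| ∧ |y - b| ≤ |x - y|) :
    ∫⁻ x in J, (∫⁻ y in I, ENNReal.ofReal |x - y|⁻¹ ∂σ) ∂w ≤
      ∫⁻ t in Ioi 0, ENNReal.ofReal (t ^ (-2 : ℝ)) *
        (σ ({y | |y - b| ≤ t} ∩ I) * w ({x | |x - b| ≤ t} ∩ J)) := by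
  set p : ℝ → ℝ≥0∞ := fun t => ENNReal.ofReal (t ^ (-2 : ℝ)) with hp
  set S : Set (ℝ × ℝ) := {z | |z.1 - b| ≤ z.2} with hS
  have hSm : MeasurableSet S := by
    apply measurableSet_le <;> fun_prop
  have hsec : ∀ t, MeasurableSet {x : ℝ | |x - b| ≤ t} := fun t => by
    apply measurableSet_le <;> fun_prop
  set χ : ℝ × ℝ → ℝ≥0∞ := S.indicator 1 with hχ
  have hχm : Measurable χ := measurable_one.indicator hSm
  have hpm : Measurable p := by fun_prop
  have hχint : ∀ (μ : Measure ℝ) (t : ℝ) (E : Set ℝ),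
      ∫⁻ x in E, χ (x, t) ∂μ = μ ({x | |x - b| ≤ t} ∩ E) := by
    intro μ t E
    have : (fun x => χ (x, t)) = {x : ℝ | |x - b| ≤ t}.indicator 1 := by
      ext x; simp [hχ, hS, Set.indicator]
    rw [this, lintegral_indicator_one (hsec t), Measure.restrict_apply (hsec t)]
  calc _ ≤ ∫⁻ x in J, (∫⁻ y in I, (∫⁻ t in Ioi 0, p t * (χ (y, t) * χ (x, t))) ∂σ) ∂w := by
        refine setLIntegral_mono' hJ fun x hx => setLIntegral_mono' hI fun y hy => ?_
        have hxy : 0 < |x - y| := abs_pos.2 (sub_ne_zero.2 fun h =>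
          Set.disjoint_left.1 hIJ hy (h ▸ hx))
        rw [← lintegral_Ioi_inv_sq hxy]
        refine le_trans ?_ (lintegral_mono_set (Ioi_subset_Ioi hxy.le))
        refine setLIntegral_mono' measurableSet_Ioi fun t ht => ?_
        have h1 : (x, t) ∈ S := (hb x hx y hy).1.trans (le_of_lt ht)
        have h2 : (y, t) ∈ S := (hb x hx y hy).2.trans (le_of_lt ht)
        simp [hχ, h1, h2, hp]
    _ = ∫⁻ x in J, (∫⁻ t in Ioi 0, p t * (σ ({y | |y - b| ≤ t} ∩ I) * χ (x, t))) ∂w := by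
        refine lintegral_congr fun x => ?_
        rw [lintegral_lintegral_swap (by fun_prop)]
        refine lintegral_congr fun t => ?_
        rw [lintegral_const_mul _ (by fun_prop), lintegral_mul_const _ (by fun_prop), hχint]
    _ = _ := by
        have hm : Measurable fun t => σ ({y | |y - b| ≤ t} ∩ I) := by
          have : Measurable fun t => ∫⁻ y in I, χ (y, t) ∂σ :=
            Measurable.lintegral_prod_left' hχm
          simpa only [hχint] using this
        have hχt : ∀ t, Measurable fun x => χ (x, t) := fun t => hχm.comp measurable_prodMk_right
        have hprod : Measurable fun z : ℝ × ℝ =>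
            p z.2 * (σ ({y | |y - b| ≤ z.2} ∩ I) * χ z) :=
          (hpm.comp measurable_snd).mul ((hm.comp measurable_snd).mul hχm)
        rw [lintegral_lintegral_swap hprod.aemeasurable]
        refine lintegral_congr fun t => ?_
        rw [lintegral_const_mul _ ((hχt t).const_mul _), lintegral_const_mul _ (hχt t), hχint]

/-- Two disjoint nonempty order-connected sets lie on opposite sides of some point. -/
lemma exists_separating {I J : Set ℝ} (hI : I.OrdConnected) (hJ : J.OrdConnected)
    (hIne : I.Nonempty) (hJne : J.Nonempty) (hd : Disjoint I J) :
    ∃ b, ((∀ x ∈ J, x ≤ b) ∧ ∀ y ∈ I, b ≤ y) ∨ ((∀ y ∈ I, y ≤ b) ∧ ∀ x ∈ J, b ≤ x) := by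
  have key : (∀ x ∈ J, ∀ y ∈ I, x ≤ y) ∨ ∀ y ∈ I, ∀ x ∈ J, y ≤ x := by
    by_contra! h
    obtain ⟨⟨x, hx, y, hy, hyx⟩, y', hy', x', hx', hxy'⟩ := h
    have hn : ∀ z ∈ I, z ∉ J := fun z hz => Set.disjoint_left.1 hd hz
    rcases le_total x y' with h | h
    · exact hn x (hI.out hy hy' ⟨hyx.le, h⟩) hx
    · exact hn y' hy' (hJ.out hx' hx ⟨hxy'.le, h⟩)
  rcases key with h | h
  · exact ⟨sSup J, Or.inl ⟨fun x hx => le_csSup ⟨hIne.some, fun z hz => h z hz _ hIne.some_mem⟩ hx,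
      fun y hy => csSup_le hJne fun x hx => h x hx y hy⟩⟩
  · exact ⟨sSup I, Or.inr ⟨fun x hx => le_csSup ⟨hJne.some, fun z hz => h z hz _ hJne.some_mem⟩ hx,
      fun y hy => csSup_le hIne fun x hx => h x hx y hy⟩⟩

theorem statement5 (σ w : Measure ℝ) [IsLocallyFiniteMeasure σ] [IsLocallyFiniteMeasure w]
    (A : ℝ) (hA : 0 ≤ A) (hA2 : SimpleA2 σ w A)
    (I J : Set ℝ) (hI : I.OrdConnected) (hJ : J.OrdConnected)
    (hJne : J.Nonempty) (hJbdd : Bornology.IsBounded J)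
    -- `I ⊂ 3J ∖ J`:
    (hIJ : I ⊆ {x : ℝ | |x - (sInf J + sSup J) / 2| ≤ (3 / 2) * (sSup J - sInf J)} \ J) :
    ∫⁻ x in J, (∫⁻ y in I, ENNReal.ofReal |x - y|⁻¹ ∂σ) ∂w ≤
      ENNReal.ofReal (2 * A * Real.sqrt (σ I).toReal * Real.sqrt (w J).toReal) := by
  rcases I.eq_empty_or_nonempty with rfl | hIne
  · simp
  have hd : Disjoint I J := Set.disjoint_left.2 fun x hx => (hIJ hx).2
  -- `3J` is a closed ball, so `I` is bounded
  have hIbdd : Bornology.IsBounded I :=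
    Metric.isBounded_closedBall.subset fun x hx => by
      simpa [Real.dist_eq] using (hIJ hx).1
  have hσ : σ I ≠ ∞ := hIbdd.measure_lt_top.ne
  have hw : w J ≠ ∞ := hJbdd.measure_lt_top.ne
  obtain ⟨b, hb⟩ := exists_separating hI hJ hIne hJne hd
  have hdist : ∀ x ∈ J, ∀ y ∈ I, |x - b| ≤ |x - y| ∧ |y - b| ≤ |x - y| := by
    intro x hx y hy
    rcases hb with ⟨h1, h2⟩ | ⟨h1, h2⟩
    · have := h1 x hx
      have := h2 y hy
      rw [abs_of_nonpos (by linarith : x - b ≤ 0), abs_of_nonneg (by linarith : 0 ≤ y - b),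
        abs_of_nonpos (by linarith : x - y ≤ 0)]
      constructor <;> linarith
    · have := h1 y hy
      have := h2 x hx
      rw [abs_of_nonneg (by linarith : 0 ≤ x - b), abs_of_nonpos (by linarith : y - b ≤ 0),
        abs_of_nonneg (by linarith : 0 ≤ x - y)]
      constructor <;> linarith
  refine (lintegral_kernel_le σ w hI.measurableSet hJ.measurableSet hd hdist).trans ?_
  rw [mul_assoc, ← Real.sqrt_mul ENNReal.toReal_nonneg]
  refine lintegral_min_le hA (by positivity) (fun t ht => ?_) fun t _ => ?_
  · rcases hb with ⟨h1, h2⟩ | ⟨h1, h2⟩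
    · obtain ⟨K, L, hKL, hlen, hK, hL⟩ := exists_adjacentEq ht hd.symm h1 h2
      refine hA2.mul_le hKL.symm ?_ hL hK
      rw [← hlen]
      exact hKL.2.2.2.2.2.2.2.2.symm
    · obtain ⟨K, L, hKL, hlen, hK, hL⟩ := exists_adjacentEq ht hd h1 h2
      exact hA2.mul_le hKL hlen hK hL
  · rw [ENNReal.ofReal_mul ENNReal.toReal_nonneg, ENNReal.ofReal_toReal hσ,
      ENNReal.ofReal_toReal hw]
    exact mul_le_mul' (measure_mono inter_subset_right) (measure_mono inter_subset_right)
end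
end

section
/- Let σ and w be Radon measures on ℝ and let f, g ∈ 𝓕. Then the function ε ↦ B_ε(f,g) := ∬_{|x−y|>ε} (x−y)⁻¹ f(y) g(x) dσ(y) dw(x) is right-continuous with left limits on (0,∞), and its left limit at ε equals ∬_{|x−y|≥ε} (x−y)⁻¹ f(y) g(x) dσ(y) dw(x). -/
/-!
The kernel truncated to `|x - y| > t` with `t > ε / 2` is bounded by `2 / ε`, and `f`, `g` are
integrable, so both iterated integrals obey dominated convergence uniformly in `t`
(`tendsto_truncPairing`). Pointwise in `z = x - y`, the condition `t < |z|` is eventually constant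
as `t → ε`: it becomes `ε < |z|` for `t ↓ ε` and `ε ≤ |z|` for `t ↑ ε`, which gives right-continuity
and the left limit respectively.
-/

open MeasureTheory Set Filter
open scoped ENNReal Topology

noncomputable section

/-- `𝓕`: finite linear combinations of indicator functions of finite half-open intervals. -/
def InF (f : ℝ → ℝ) : Prop :=
  f ∈ Submodule.span ℝ {g : ℝ → ℝ | ∃ a b : ℝ, g = (Set.Ico a b).indicator 1}

/-- The truncated Hilbert pairing
`B_ε(f,g) = ∬_{|x-y|>ε} (x-y)⁻¹ f(y) g(x) dσ(y) dw(x)`. -/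
def truncPairing (σ w : Measure ℝ) (f g : ℝ → ℝ) (ε : ℝ) : ℝ :=
  ∫ x, (∫ y, (if ε < |x - y| then (x - y)⁻¹ * f y else 0) ∂σ) * g x ∂w

/-- The variant of the truncated Hilbert pairing with non-strict truncation
`∬_{|x-y|≥ε} (x-y)⁻¹ f(y) g(x) dσ(y) dw(x)`. -/
def truncPairingGe (σ w : Measure ℝ) (f g : ℝ → ℝ) (ε : ℝ) : ℝ :=
  ∫ x, (∫ y, (if ε ≤ |x - y| then (x - y)⁻¹ * f y else 0) ∂σ) * g x ∂w

/-- Elements of `𝓕` are Borel measurable. -/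
lemma InF.measurable {f : ℝ → ℝ} (hf : InF f) : Measurable f := by
  induction hf using Submodule.span_induction with
  | mem u hu =>
    obtain ⟨a, b, rfl⟩ := hu
    exact measurable_one.indicator measurableSet_Ico
  | zero => exact measurable_zero
  | add u v _ _ hu hv => exact hu.add hv
  | smul c u _ hu => exact hu.const_smul c

/-- Elements of `𝓕` are bounded with bounded support, hence integrable for any Radon measure. -/
lemma InF.integrable {f : ℝ → ℝ} (hf : InF f) (μ : Measure ℝ) [IsLocallyFiniteMeasure μ] :
    Integrable f μ := by
  induction hf using Submodule.span_induction with
  | mem u hu =>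
    obtain ⟨a, b, rfl⟩ := hu
    exact (integrable_indicator_iff measurableSet_Ico).2
      (integrableOn_const (C := (1 : ℝ)) (measure_Ico_lt_top.ne))
  | zero => exact integrable_zero _ _ _
  | add u v _ _ hu hv => exact hu.add hv
  | smul c u _ hu => exact hu.smul c

/-- A kernel truncated to a set on which `|x - y| > δ` is dominated by `δ⁻¹ |f|`. -/
lemma norm_truncKernel_le {P : Prop} [Decidable P] {δ z c : ℝ} (hδ : 0 < δ) (hP : P → δ < |z|) :
    ‖if P then z⁻¹ * c else 0‖ ≤ δ⁻¹ * ‖c‖ := by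
  split_ifs with h
  · rw [norm_mul, norm_inv, Real.norm_eq_abs z]
    have := (hP h).le
    gcongr
  · rw [norm_zero]
    positivity

/-- Dominated convergence for the pairing along any countably generated filter `l` of truncation
parameters that is bounded away from `0` and along which the truncation condition `t < |z|`
stabilizes, for every `z`, to a limiting condition `Q z`. -/
lemma tendsto_truncPairing (σ w : Measure ℝ) [IsLocallyFiniteMeasure σ]
    [IsLocallyFiniteMeasure w] {f g : ℝ → ℝ} (hf : InF f) (hg : InF g)
    {l : Filter ℝ} [l.IsCountablyGenerated] {δ : ℝ} (hδ : 0 < δ) (hl : ∀ᶠ t in l, δ < t)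
    (Q : ℝ → Prop) [DecidablePred Q] (hQ : ∀ z, ∀ᶠ t in l, (t < |z| ↔ Q z)) :
    Tendsto (truncPairing σ w f g) l
      (𝓝 (∫ x, (∫ y, (if Q (x - y) then (x - y)⁻¹ * f y else 0) ∂σ) * g x ∂w)) := by
  have hfi := hf.integrable σ
  have hfm := hf.measurable
  have hgm := hg.measurable
  have hmeas : ∀ t : ℝ, Measurable
      (fun p : ℝ × ℝ => if t < |p.1 - p.2| then (p.1 - p.2)⁻¹ * f p.2 else 0) := fun t =>
    Measurable.ite
      (measurableSet_lt measurable_const (by fun_prop : Measurable fun p : ℝ × ℝ => |p.1 - p.2|))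
      (by fun_prop) measurable_const
  have hbound : ∀ t, δ < t → ∀ x y : ℝ,
      ‖if t < |x - y| then (x - y)⁻¹ * f y else 0‖ ≤ δ⁻¹ * ‖f y‖ :=
    fun t ht x y => norm_truncKernel_le hδ fun h => ht.trans h
  refine tendsto_integral_filter_of_dominated_convergence
    (fun x => (∫ y, δ⁻¹ * ‖f y‖ ∂σ) * ‖g x‖) ?_ ?_ ?_ ?_
  · refine Eventually.of_forall fun t => ?_
    exact ((hmeas t).stronglyMeasurable.integral_prod_right.mul
      hgm.stronglyMeasurable).aestronglyMeasurable
  · filter_upwards [hl] with t ht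
    refine Eventually.of_forall fun x => ?_
    rw [norm_mul]
    gcongr
    exact norm_integral_le_of_norm_le (hfi.norm.const_mul _) (Eventually.of_forall (hbound t ht x))
  · exact (hg.integrable w).norm.const_mul _
  · refine Eventually.of_forall fun x => Tendsto.mul_const _ ?_
    refine tendsto_integral_filter_of_dominated_convergence (fun y => δ⁻¹ * ‖f y‖) ?_ ?_
      (hfi.norm.const_mul _) ?_
    · exact Eventually.of_forall fun t =>
        ((hmeas t).comp measurable_prodMk_left).aestronglyMeasurable
    · filter_upwards [hl] with t ht
      exact Eventually.of_forall (hbound t ht x)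
    · refine Eventually.of_forall fun y => tendsto_const_nhds.congr' ?_
      filter_upwards [hQ (x - y)] with t ht
      simp only [ht]

theorem statement7 (σ w : Measure ℝ) [IsLocallyFiniteMeasure σ] [IsLocallyFiniteMeasure w]
    (f g : ℝ → ℝ) (hf : InF f) (hg : InF g) (ε : ℝ) (hε : 0 < ε) :
    -- right-continuity at `ε`:
    ContinuousWithinAt (truncPairing σ w f g) (Set.Ici ε) ε ∧
    -- existence and identification of the left limit at `ε`:
    Filter.Tendsto (truncPairing σ w f g) (𝓝[<] ε) (𝓝 (truncPairingGe σ w f g ε)) := by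
  have hhalf : ∀ᶠ t in 𝓝 ε, ε / 2 < t := lt_mem_nhds (half_lt_self hε)
  constructor
  · refine tendsto_truncPairing σ w hf hg (half_pos hε) (hhalf.filter_mono nhdsWithin_le_nhds)
      (fun z => ε < |z|) fun z => ?_
    by_cases hz : ε < |z|
    · filter_upwards [nhdsWithin_le_nhds (gt_mem_nhds hz)] with t ht
      exact iff_of_true ht hz
    · filter_upwards [self_mem_nhdsWithin] with t ht
      exact iff_of_false (fun h => hz (lt_of_le_of_lt ht h)) hz
  · refine tendsto_truncPairing σ w hf hg (half_pos hε) (hhalf.filter_mono nhdsWithin_le_nhds)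
      (fun z => ε ≤ |z|) fun z => ?_
    by_cases hz : ε ≤ |z|
    · filter_upwards [self_mem_nhdsWithin] with t ht
      exact iff_of_true (lt_of_lt_of_le ht hz) hz
    · filter_upwards [nhdsWithin_le_nhds (lt_mem_nhds (not_le.1 hz))] with t ht
      exact iff_of_false (not_lt.2 (le_of_lt ht)) hz
end
end
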